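/- Let A ∈ ℝ^{d₁×⋯×dₙ} be a tensor with Tucker ranks (r₁,…,rₙ). For each mode i, let I_i ⊆ [d_i] be an index set and let J_i = ⊗_{j≠i} I_j be the corresponding product index set into ∏_{j≠i} d_j. Define R = A[I₁,…,Iₙ] (the subtensor of A restricted to the sampled indices in every mode), C_i = (A_(i))[:,J_i] (the columns of the mode-i unfolding of A indexed by J_i), and U_i = (C_i)[I_i,:] (the rows of C_i indexed by I_i). Then the following three conditions are equivalent: (1) A = R ×_{i=1}^n (C_i U_i†); (2) rank(U_i) = r_i for all i ∈ [n]; (3) rank(C_i) = r_i for all i ∈ [n] and R has Tucker rank (r₁,…,rₙ). -/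

import Mathlib

open scoped Matrix

/-- The mode-`k` unfolding of a tensor. -/
noncomputable def unfold {n : ℕ} {κ : Fin n → Type*} (k : Fin n)
    (T : (∀ i, κ i) → ℝ) : Matrix (κ k) (∀ j : {j : Fin n // j ≠ k}, κ j.1) ℝ :=
  fun a b => T fun m => if h : m = k then cast (congrArg κ h.symm) a else b ⟨m, h⟩

/-- The full multimode (Tucker) product `C ×₁ A₁ ×₂ ⋯ ×ₙ Aₙ` of a core tensor with one
matrix per mode. -/
noncomputable def tuckerProd {n : ℕ} {κ ι : Fin n → Type*} [∀ i, Fintype (κ i)]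
    (C : (∀ i, κ i) → ℝ) (A : ∀ i, Matrix (ι i) (κ i) ℝ) : (∀ i, ι i) → ℝ :=
  fun j => ∑ s : ∀ i, κ i, C s * ∏ i, A i (j i) (s i)

/-- `B` satisfies the four Penrose conditions for the real matrix `A`. -/
def IsMoorePenrose {m n : Type*} [Fintype m] [Fintype n]
    (A : Matrix m n ℝ) (B : Matrix n m ℝ) : Prop :=
  A * B * A = A ∧ B * A * B = B ∧ (A * B)ᵀ = A * B ∧ (B * A)ᵀ = B * A

/-- The Moore–Penrose pseudoinverse of a real matrix. -/
noncomputable def pinv {m n : Type*} [Fintype m] [Fintype n]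
    (A : Matrix m n ℝ) : Matrix n m ℝ :=
  by classical exact if h : ∃ B, IsMoorePenrose A B then h.choose else 0

/-!
In mode `k`, the Tucker product `T ×ᵢ Wᵢ` unfolds to `W_k T_(k) (⨂_{j ≠ k} W_j)ᵀ`, so its Tucker
ranks are at most those of its core `T`. Since `U_i` is the mode-`i` unfolding of the core `R`, the
decomposition forces `rank U_i = r_i`. Conversely, if `rank U_i = r_i`, the matrix CUR identity
`C_i U_i† (A_(i))[I_i, :] = A_(i)` says that multiplying `A` in mode `i` by `C_i U_i† S_i` fixes
`A`, where `S_i` selects the rows `I_i`. Doing this in all modes gives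
`A = A ×ᵢ (C_i U_i† S_i) = R ×ᵢ (C_i U_i†)`.
-/

section GeneralizedInverse

variable {K m n p q : Type*} [Field K] [Fintype n] [Fintype q]

theorem exists_submatrix_mul_eq_of_rank_eq (A : Matrix m n K) (f : q → n)
    (h : (A.submatrix id f).rank = A.rank) :
    ∃ X : Matrix q n K, A.submatrix id f * X = A := by
  have range_le : (A.submatrix id f).mulVecLin.range ≤ A.mulVecLin.range := by
    rw [Matrix.range_mulVecLin, Matrix.range_mulVecLin]
    exact Submodule.span_mono (Set.range_comp_subset_range f A.col)
  have range_eq := Submodule.eq_of_le_of_finrank_eq range_le h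
  have col_mem (j : n) : A.col j ∈ (A.submatrix id f).mulVecLin.range := by
    rw [range_eq, Matrix.range_mulVecLin]
    exact Submodule.subset_span ⟨j, rfl⟩
  choose x hx using col_mem
  exact ⟨Matrix.of fun a j => x j a, Matrix.ext fun a j => congrFun (hx j) a⟩

theorem exists_mul_submatrix_eq_of_rank_eq [Finite m] [Fintype p] (A : Matrix m n K)
    (e : p → m) (h : (A.submatrix e id).rank = A.rank) :
    ∃ Y : Matrix m p K, Y * A.submatrix e id = A := by
  have := Fintype.ofFinite m
  obtain ⟨X, hX⟩ := exists_submatrix_mul_eq_of_rank_eq Aᵀ e (by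
    rw [← Matrix.transpose_submatrix, Matrix.rank_transpose, Matrix.rank_transpose, h])
  refine ⟨Xᵀ, Matrix.transpose_injective ?_⟩
  rw [Matrix.transpose_mul, Matrix.transpose_transpose, Matrix.transpose_submatrix, hX]

theorem cur_eq_self_of_rank_eq [Finite m] [Fintype p] (A : Matrix m n K)
    (e : p → m) (f : q → n) {G : Matrix q p K}
    (hG : A.submatrix e f * G * A.submatrix e f = A.submatrix e f)
    (h : (A.submatrix e f).rank = A.rank) :
    A.submatrix id f * G * A.submatrix e id = A := by
  have rank_cols_le : (A.submatrix id f).rank ≤ A.rank := A.rank_submatrix_le id f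
  have rank_core_le : (A.submatrix e f).rank ≤ (A.submatrix id f).rank :=
    (A.submatrix id f).rank_submatrix_le e id
  obtain ⟨X, hX⟩ := exists_submatrix_mul_eq_of_rank_eq A f (by omega)
  obtain ⟨Y, hY⟩ : ∃ Y : Matrix m p K, Y * A.submatrix e f = A.submatrix id f :=
    exists_mul_submatrix_eq_of_rank_eq (A.submatrix id f) e
      (show (A.submatrix e f).rank = _ by omega)
  have rows_eq : A.submatrix e id = A.submatrix e f * X :=
    congrArg (fun B : Matrix m n K => B.submatrix e id) hX.symm
  calc A.submatrix id f * G * A.submatrix e id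
      = Y * (A.submatrix e f * G * A.submatrix e f) * X := by
        rw [rows_eq, ← hY]; simp only [Matrix.mul_assoc]
    _ = A := by rw [hG, hY, hX]

end GeneralizedInverse

section MoorePenrose

variable {m n : Type*} [Fintype m] [Fintype n]

-- Since `0⁻¹ = 0`, the function `x ↦ x⁻¹` inverts exactly the nonzero eigenvalues.
theorem isMoorePenrose_cfc_inv [DecidableEq n] {H : Matrix n n ℝ} (hH : H.IsHermitian) :
    IsMoorePenrose H (cfc (fun x : ℝ => x⁻¹) H) := by
  have cont (f : ℝ → ℝ) : ContinuousOn f (spectrum ℝ H) :=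
    Matrix.finite_real_spectrum.continuousOn f
  have cfc_self : cfc (fun x : ℝ => x) H = H := cfc_id' ℝ H hH.isSelfAdjoint
  have cfc_mul_cfc (f g : ℝ → ℝ) : cfc f H * cfc g H = cfc (fun x => f x * g x) H :=
    (cfc_mul f g H (cont f) (cont g)).symm
  have cfc_symm (f : ℝ → ℝ) : (cfc f H)ᵀ = cfc f H := cfc_predicate f H
  suffices IsMoorePenrose (cfc (fun x : ℝ => x) H) (cfc (fun x : ℝ => x⁻¹) H) by
    rwa [cfc_self] at this
  have inv_mul_inv (x : ℝ) : x⁻¹ * x * x⁻¹ = x⁻¹ := by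
    simpa only [inv_inv] using mul_inv_mul_cancel x⁻¹
  simp only [IsMoorePenrose, cfc_mul_cfc, cfc_symm, mul_inv_mul_cancel, inv_mul_inv, and_self]

theorem IsMoorePenrose.mul_transpose_of_gram {A : Matrix m n ℝ} {G : Matrix n n ℝ}
    (hG : IsMoorePenrose (Aᵀ * A) G) (hG_symm : G.IsSymm) : IsMoorePenrose A (G * Aᵀ) := by
  classical
  obtain ⟨gram_mul_gram, mul_gram_mul, -, mul_gram_symm⟩ := hG
  have gram_mul_sub : Aᴴ * A * (G * Aᵀ * A - 1) = 0 := by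
    rw [Matrix.conjTranspose_eq_transpose_of_trivial, Matrix.mul_sub, Matrix.mul_one,
      Matrix.mul_assoc G, ← Matrix.mul_assoc, gram_mul_gram, sub_self]
  refine ⟨?_, ?_, ?_, ?_⟩
  · rw [Matrix.conjTranspose_mul_self_mul_eq_zero, Matrix.mul_sub, Matrix.mul_one, sub_eq_zero,
      Matrix.mul_assoc G] at gram_mul_sub
    simpa only [Matrix.mul_assoc] using gram_mul_sub
  · rw [Matrix.mul_assoc G, ← Matrix.mul_assoc, mul_gram_mul]
  · rw [Matrix.transpose_mul, Matrix.transpose_mul, Matrix.transpose_transpose, hG_symm.eq,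
      Matrix.mul_assoc]
  · rw [Matrix.mul_assoc, mul_gram_symm]

theorem exists_isMoorePenrose (A : Matrix m n ℝ) : ∃ B, IsMoorePenrose A B := by
  classical
  have gram_hermitian : (Aᵀ * A).IsHermitian := Matrix.isHermitian_conjTranspose_mul_self A
  exact ⟨_, (isMoorePenrose_cfc_inv gram_hermitian).mul_transpose_of_gram
    (cfc_predicate (fun x : ℝ => x⁻¹) (Aᵀ * A))⟩

theorem isMoorePenrose_pinv (A : Matrix m n ℝ) : IsMoorePenrose A (pinv A) := by
  rw [pinv, dif_pos (exists_isMoorePenrose A)]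
  exact (exists_isMoorePenrose A).choose_spec

end MoorePenrose

section PiKronecker

variable {J R : Type*} [Fintype J] [CommSemiring R] {ι κ μ : J → Type*}

/-- The Kronecker product `⨂ j, A j` of a finite family of matrices, with rows and columns indexed
by multi-indices. It expresses both the Tucker product and its unfoldings as matrix products. -/
def piKronecker (A : ∀ j, Matrix (ι j) (κ j) R) : Matrix (∀ j, ι j) (∀ j, κ j) R :=
  Matrix.of fun s t => ∏ j, A j (s j) (t j)

theorem piKronecker_one [∀ j, DecidableEq (ι j)] :
    piKronecker (fun j => (1 : Matrix (ι j) (ι j) R)) = 1 := by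
  ext s t
  simp [piKronecker, Matrix.one_apply, Fintype.prod_ite_zero, funext_iff]

theorem piKronecker_mul [DecidableEq J] [∀ j, Fintype (κ j)]
    (A : ∀ j, Matrix (ι j) (κ j) R) (B : ∀ j, Matrix (κ j) (μ j) R) :
    piKronecker (fun j => A j * B j) = piKronecker A * piKronecker B := by
  ext s t
  simp only [piKronecker, Matrix.of_apply, Matrix.mul_apply, Fintype.prod_sum,
    Finset.prod_mul_distrib]

end PiKronecker

section PiSplitAt

variable {J : Type*} [DecidableEq J] {κ : J → Type*} (k : J) (a : κ k)
  (b : ∀ j : {j // j ≠ k}, κ j)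

theorem piSplitAt_symm_apply_self : (Equiv.piSplitAt k κ).symm (a, b) k = a := by
  simp [Equiv.piSplitAt]

theorem piSplitAt_symm_apply_ne (j : {j // j ≠ k}) :
    (Equiv.piSplitAt k κ).symm (a, b) j = b j := by
  simp [Equiv.piSplitAt, j.2]

end PiSplitAt

section Unfold

variable {n : ℕ} {ι κ : Fin n → Type*}

theorem unfold_apply (k : Fin n) (T : (∀ i, κ i) → ℝ) (a : κ k)
    (b : ∀ j : {j : Fin n // j ≠ k}, κ j.1) :
    unfold k T a b = T ((Equiv.piSplitAt k κ).symm (a, b)) := by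
  refine congrArg T (funext fun m => ?_)
  by_cases h : m = k
  · subst h; simp [Equiv.piSplitAt]
  · simp [h, Equiv.piSplitAt]

theorem unfold_injective (k : Fin n) :
    Function.Injective (unfold k : ((∀ i, κ i) → ℝ) → Matrix (κ k) _ ℝ) := by
  intro S T h
  funext s
  obtain ⟨⟨a, b⟩, rfl⟩ := (Equiv.piSplitAt k κ).symm.surjective s
  rw [← unfold_apply k S, ← unfold_apply k T, h]

theorem unfold_comp_map (T : (∀ i, ι i) → ℝ) (e : ∀ i, κ i → ι i) (k : Fin n) :
    unfold k (fun s => T fun i => e i (s i)) =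
      (unfold k T).submatrix (e k) (fun c j => e j (c j)) := by
  ext a b
  refine congrArg T (funext fun m => ?_)
  by_cases h : m = k
  · subst h; simp
  · simp [h]

end Unfold

section TuckerProd

variable {n : ℕ} {ι κ μ : Fin n → Type*} [∀ i, Fintype (κ i)]

theorem tuckerProd_eq_mulVec (T : (∀ i, κ i) → ℝ) (A : ∀ i, Matrix (ι i) (κ i) ℝ) :
    tuckerProd T A = piKronecker A *ᵥ T :=
  funext fun _ => Finset.sum_congr rfl fun _ _ => mul_comm _ _

theorem tuckerProd_one [∀ i, DecidableEq (κ i)] (T : (∀ i, κ i) → ℝ) :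
    tuckerProd T (fun _ => 1) = T := by
  rw [tuckerProd_eq_mulVec, piKronecker_one, Matrix.one_mulVec]

theorem tuckerProd_tuckerProd [∀ i, Fintype (ι i)] (T : (∀ i, κ i) → ℝ)
    (A : ∀ i, Matrix (ι i) (κ i) ℝ) (B : ∀ i, Matrix (μ i) (ι i) ℝ) :
    tuckerProd (tuckerProd T A) B = tuckerProd T (fun i => B i * A i) := by
  rw [tuckerProd_eq_mulVec, tuckerProd_eq_mulVec, tuckerProd_eq_mulVec, Matrix.mulVec_mulVec,
    piKronecker_mul]

theorem tuckerProd_one_submatrix [∀ i, DecidableEq (κ i)] (T : (∀ i, κ i) → ℝ)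
    (e : ∀ i, ι i → κ i) :
    tuckerProd T (fun i => (1 : Matrix (κ i) (κ i) ℝ).submatrix (e i) id) =
      fun s => T fun i => e i (s i) :=
  funext fun s => congrFun (tuckerProd_one T) fun i => e i (s i)

theorem unfold_tuckerProd (T : (∀ i, κ i) → ℝ) (A : ∀ i, Matrix (ι i) (κ i) ℝ) (k : Fin n) :
    unfold k (tuckerProd T A) =
      A k * unfold k T * (piKronecker fun j : {j : Fin n // j ≠ k} => A j)ᵀ := by
  ext a b
  rw [Matrix.mul_assoc]
  simp only [Matrix.mul_apply, Finset.mul_sum]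
  rw [unfold_apply, tuckerProd, ← Equiv.sum_comp (Equiv.piSplitAt k κ).symm,
    Fintype.sum_prod_type]
  refine Finset.sum_congr rfl fun x _ => Finset.sum_congr rfl fun s _ => ?_
  rw [Fintype.prod_eq_mul_prod_subtype_ne _ k, ← unfold_apply k T]
  simp only [piSplitAt_symm_apply_self, piSplitAt_symm_apply_ne, Matrix.transpose_apply,
    piKronecker, Matrix.of_apply]
  ring

theorem rank_unfold_tuckerProd_le [∀ i, Fintype (ι i)] (T : (∀ i, κ i) → ℝ)
    (A : ∀ i, Matrix (ι i) (κ i) ℝ) (k : Fin n) :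
    (unfold k (tuckerProd T A)).rank ≤ (unfold k T).rank := by
  rw [unfold_tuckerProd]
  exact (Matrix.rank_mul_le_left _ _).trans (Matrix.rank_mul_le_right _ _)

theorem tuckerProd_update_one_eq_self [∀ i, DecidableEq (κ i)] (T : (∀ i, κ i) → ℝ) (k : Fin n)
    {P : Matrix (κ k) (κ k) ℝ} (h : P * unfold k T = unfold k T) :
    tuckerProd T (Function.update (fun _ => 1) k P) = T := by
  have other_modes : (fun j : {j : Fin n // j ≠ k} =>
      Function.update (fun i => (1 : Matrix (κ i) (κ i) ℝ)) k P j) = fun _ => 1 :=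
    funext fun j => Function.update_of_ne j.2 _ _
  apply unfold_injective k
  rw [unfold_tuckerProd, Function.update_self, other_modes, piKronecker_one,
    Matrix.transpose_one, Matrix.mul_one, h]

theorem tuckerProd_eq_self_of_mul_unfold_eq (T : (∀ i, κ i) → ℝ)
    {P : ∀ i, Matrix (κ i) (κ i) ℝ} (h : ∀ k, P k * unfold k T = unfold k T) :
    tuckerProd T P = T := by
  classical
  suffices ∀ S : Finset (Fin n), tuckerProd T (S.piecewise P fun _ => 1) = T by
    simpa only [Finset.piecewise_univ] using this Finset.univ
  intro S
  induction S using Finset.induction_on with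
  | empty => rw [Finset.piecewise_empty, tuckerProd_one]
  | insert k S hk ih =>
    have piecewise_insert_eq_mul : (insert k S).piecewise P (fun _ => 1) = fun i =>
        S.piecewise P (fun _ => 1) i *
          Function.update (fun i => (1 : Matrix (κ i) (κ i) ℝ)) k (P k) i := by
      funext i
      obtain rfl | hi := eq_or_ne i k
      · simp [hk]
      · simp [hi, Finset.piecewise_insert_of_ne]
    rw [piecewise_insert_eq_mul, ← tuckerProd_tuckerProd,
      tuckerProd_update_one_eq_self T k (h k), ih]

theorem tuckerProd_comp_map_eq_self [∀ i, Finite (ι i)] (T : (∀ i, ι i) → ℝ) (e : ∀ i, κ i → ι i)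
    {W : ∀ i, Matrix (ι i) (κ i) ℝ}
    (h : ∀ k, W k * (unfold k T).submatrix (e k) id = unfold k T) :
    tuckerProd (fun s => T fun i => e i (s i)) W = T := by
  classical
  have (i : Fin n) : Fintype (ι i) := Fintype.ofFinite (ι i)
  rw [← tuckerProd_one_submatrix, tuckerProd_tuckerProd]
  refine tuckerProd_eq_self_of_mul_unfold_eq T fun k => ?_
  rw [Matrix.mul_assoc, ← Equiv.coe_refl, Matrix.one_submatrix_mul]
  exact h k

end TuckerProd

theorem tensor_pseudoskeleton_characterization_general {n : ℕ} {ι κ : Fin n → Type*}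
    [∀ i, Fintype (ι i)] [∀ i, Fintype (κ i)] {r : Fin n → ℕ}
    (A : (∀ i, ι i) → ℝ) (hrank : ∀ i, (unfold i A).rank = r i) (e : ∀ i, κ i → ι i)
    (G : ∀ i, Matrix (∀ j : {j : Fin n // j ≠ i}, κ j.1) (κ i) ℝ) :
    let R : (∀ i, κ i) → ℝ := fun s => A fun i => e i (s i)
    let C : ∀ i : Fin n, Matrix (ι i) (∀ j : {j : Fin n // j ≠ i}, κ j.1) ℝ :=
      fun i => (unfold i A).submatrix id (fun c j => e j.1 (c j))
    let U : ∀ i : Fin n, Matrix (κ i) (∀ j : {j : Fin n // j ≠ i}, κ j.1) ℝ :=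
      fun i => (C i).submatrix (e i) id
    (∀ i, U i * G i * U i = U i) →
    ((A = tuckerProd R fun i => C i * G i) ↔ (∀ i, (U i).rank = r i)) ∧
    ((∀ i, (U i).rank = r i) ↔
      ((∀ i, (C i).rank = r i) ∧ ∀ i, (unfold i R).rank = r i)) := by
  intro R C U hG
  have unfold_R (i) : unfold i R = U i := unfold_comp_map A e i
  have rank_C_le (i) : (C i).rank ≤ r i := hrank i ▸ (unfold i A).rank_submatrix_le id _
  have rank_U_le (i) : (U i).rank ≤ (C i).rank := (C i).rank_submatrix_le (e i) id
  simp only [unfold_R]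
  refine ⟨⟨fun hA i => ?_, fun hU => ?_⟩, fun hU => ⟨fun i => ?_, hU⟩, And.right⟩
  · refine ((rank_U_le i).trans (rank_C_le i)).antisymm ?_
    calc r i = (unfold i (tuckerProd R fun i => C i * G i)).rank := by rw [← hA, hrank]
      _ ≤ (unfold i R).rank := rank_unfold_tuckerProd_le R _ i
      _ = (U i).rank := by rw [unfold_R]
  · have cur (k) : C k * G k * (unfold k A).submatrix (e k) id = unfold k A :=
      cur_eq_self_of_rank_eq (unfold k A) (e k) _ (hG k) ((hU k).trans (hrank k).symm)
    exact (tuckerProd_comp_map_eq_self A e cur).symm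
  · exact (rank_C_le i).antisymm (hU i ▸ rank_U_le i)

/-- Characterization of the exact tensor pseudoskeleton (CUR) decomposition: for a tensor `A`
with Tucker ranks `(r₁,…,rₙ)` and sampled index sets `Iᵢ`, with `R = A[I₁,…,Iₙ]`,
`Cᵢ = (A₍ᵢ₎)[:,Jᵢ]` (`Jᵢ = ⊗_{j≠i} Iⱼ`) and `Uᵢ = (Cᵢ)[Iᵢ,:]`, the following are equivalent:
(1) `A = R ×ᵢ (Cᵢ Uᵢ†)`; (2) `rank Uᵢ = rᵢ` for all `i`;
(3) `rank Cᵢ = rᵢ` for all `i` and `R` has Tucker rank `(r₁,…,rₙ)`. -/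
theorem tensor_pseudoskeleton_characterization {n : ℕ} {d r : Fin n → ℕ}
    (A : (∀ i, Fin (d i)) → ℝ) (hrank : ∀ i, (unfold i A).rank = r i)
    (I : ∀ i, Finset (Fin (d i))) :
    let R : (∀ i, {x // x ∈ I i}) → ℝ := fun idx => A fun i => (idx i : Fin (d i))
    let C : ∀ i : Fin n, Matrix (Fin (d i)) (∀ j : {j : Fin n // j ≠ i}, {x // x ∈ I j.1}) ℝ :=
      fun i => (unfold i A).submatrix id (fun c j => (c j : Fin (d j.1)))
    let U : ∀ i : Fin n, Matrix {x // x ∈ I i} (∀ j : {j : Fin n // j ≠ i}, {x // x ∈ I j.1}) ℝ :=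
      fun i => (C i).submatrix (fun x : {x // x ∈ I i} => (x : Fin (d i))) id
    ((A = tuckerProd R fun i => C i * pinv (U i)) ↔ (∀ i, (U i).rank = r i)) ∧
    ((∀ i, (U i).rank = r i) ↔
      ((∀ i, (C i).rank = r i) ∧ ∀ i, (unfold i R).rank = r i)) :=
  tensor_pseudoskeleton_characterization_general A hrank (fun _ => Subtype.val) (fun _ => pinv _)
    fun _ => (isMoorePenrose_pinv _).1
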